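/- For z, y, y' ∈ k^×, the formulas defining K_6(z,y,y') endow the 6-dimensional k-vector space with an H_k-module structure, and the H_k-module K_6(z,y,y') is simple if and only if y^2 ≠ y' and y'^2 ≠ zy. -/

import Mathlib

/-- The defining relations of the affine Hecke algebra of type `A_2` (for `Gl_3`),
on the free algebra on four generators `T = X 0`, `T⁻¹ = X 1`, `S_1 = X 2`, `S_2 = X 3`. -/
inductive HeckeRel (R : Type) [CommRing R] (q : R) :
    FreeAlgebra R (Fin 4) → FreeAlgebra R (Fin 4) → Prop
  | TTinv : HeckeRel R q (FreeAlgebra.ι R 0 * FreeAlgebra.ι R 1) 1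
  | TinvT : HeckeRel R q (FreeAlgebra.ι R 1 * FreeAlgebra.ι R 0) 1
  | quad : HeckeRel R q
      ((FreeAlgebra.ι R 2 + 1) * (FreeAlgebra.ι R 2 - algebraMap R (FreeAlgebra R (Fin 4)) q)) 0
  | T3S1 : HeckeRel R q (FreeAlgebra.ι R 0 ^ 3 * FreeAlgebra.ι R 2)
      (FreeAlgebra.ι R 2 * FreeAlgebra.ι R 0 ^ 3)
  | braid : HeckeRel R q (FreeAlgebra.ι R 2 * FreeAlgebra.ι R 3 * FreeAlgebra.ι R 2)
      (FreeAlgebra.ι R 3 * FreeAlgebra.ι R 2 * FreeAlgebra.ι R 3)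
  | TS2 : HeckeRel R q (FreeAlgebra.ι R 0 * FreeAlgebra.ι R 3)
      (FreeAlgebra.ι R 2 * FreeAlgebra.ι R 0)

/-- The affine Hecke algebra `H_R` with parameter `q ∈ R`. -/
abbrev HeckeAlg (R : Type) [CommRing R] (q : R) := RingQuot (HeckeRel R q)

namespace HeckeAlg

variable (R : Type) [CommRing R] (q : R)

noncomputable def gen (i : Fin 4) : HeckeAlg R q :=
  RingQuot.mkAlgHom R (HeckeRel R q) (FreeAlgebra.ι R i)

noncomputable def T : HeckeAlg R q := gen R q 0
noncomputable def Tinv : HeckeAlg R q := gen R q 1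
noncomputable def S1 : HeckeAlg R q := gen R q 2
noncomputable def S2 : HeckeAlg R q := gen R q 3

theorem T_mul_Tinv : T R q * Tinv R q = 1 := by
  simpa [T, Tinv, gen, map_mul, map_one] using
    RingQuot.mkAlgHom_rel R (HeckeRel.TTinv (R := R) (q := q))

theorem Tinv_mul_T : Tinv R q * T R q = 1 := by
  simpa [T, Tinv, gen, map_mul, map_one] using
    RingQuot.mkAlgHom_rel R (HeckeRel.TinvT (R := R) (q := q))

theorem quad_rel : (S1 R q + 1) * (S1 R q - algebraMap R (HeckeAlg R q) q) = 0 := by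
  simpa [S1, gen, map_mul, map_add, map_sub, map_one, map_zero, AlgHom.commutes] using
    RingQuot.mkAlgHom_rel R (HeckeRel.quad (R := R) (q := q))

theorem T3_mul_S1 : T R q ^ 3 * S1 R q = S1 R q * T R q ^ 3 := by
  simpa [T, S1, gen, map_mul, map_pow] using
    RingQuot.mkAlgHom_rel R (HeckeRel.T3S1 (R := R) (q := q))

theorem braid_rel : S1 R q * S2 R q * S1 R q = S2 R q * S1 R q * S2 R q := by
  simpa [S1, S2, gen, map_mul] using
    RingQuot.mkAlgHom_rel R (HeckeRel.braid (R := R) (q := q))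

theorem T_mul_S2 : T R q * S2 R q = S1 R q * T R q := by
  simpa [T, S1, S2, gen, map_mul] using
    RingQuot.mkAlgHom_rel R (HeckeRel.TS2 (R := R) (q := q))

/-- The canonical (base change) ring homomorphism `H_R → H_S` induced by a ring
homomorphism `R → S` sending the parameter `q` to the parameter `q'`. -/
noncomputable def map {R S : Type} [CommRing R] [CommRing S] (f : R →+* S) (q : R) (q' : S)
    (h : f q = q') : HeckeAlg R q →+* HeckeAlg S q' := by
  subst h
  letI : Algebra R (HeckeAlg S (f q)) :=
    RingHom.toAlgebra' ((algebraMap S (HeckeAlg S (f q))).comp f)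
      (fun c x => by simpa using Algebra.commutes (f c) x)
  refine RingQuot.lift
    ⟨((FreeAlgebra.lift R fun i => gen S (f q) i : _ →ₐ[R] HeckeAlg S (f q)) :
        FreeAlgebra R (Fin 4) →+* HeckeAlg S (f q)), ?_⟩
  have key : ∀ i : Fin 4,
      (FreeAlgebra.lift R fun j => gen S (f q) j) (FreeAlgebra.ι R i) = gen S (f q) i :=
    fun i => FreeAlgebra.lift_ι_apply _ _
  have keyq : (FreeAlgebra.lift R fun j => gen S (f q) j)
      (algebraMap R (FreeAlgebra R (Fin 4)) q) = algebraMap S (HeckeAlg S (f q)) (f q) := by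
    rw [AlgHom.commutes]
    rfl
  intro a b hab
  cases hab with
  | TTinv => simpa [key, T, Tinv] using T_mul_Tinv S (f q)
  | TinvT => simpa [key, T, Tinv] using Tinv_mul_T S (f q)
  | quad => simpa [key, keyq, S1] using quad_rel S (f q)
  | T3S1 => simpa [key, T, S1] using T3_mul_S1 S (f q)
  | braid => simpa [key, S1, S2] using braid_rel S (f q)
  | TS2 => simpa [key, T, S1, S2] using T_mul_S2 S (f q)

/-- `S_1⁻¹ = q⁻¹ (S_1 - q + 1)`, where `qi` is an inverse of `q` in `R`. -/
noncomputable def S1i (qi : R) : HeckeAlg R q :=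
  algebraMap R (HeckeAlg R q) qi * (S1 R q - algebraMap R (HeckeAlg R q) q + 1)

/-- `S_2⁻¹ = q⁻¹ (S_2 - q + 1)`, where `qi` is an inverse of `q` in `R`. -/
noncomputable def S2i (qi : R) : HeckeAlg R q :=
  algebraMap R (HeckeAlg R q) qi * (S2 R q - algebraMap R (HeckeAlg R q) q + 1)

/-- The Bernstein elements `Y_1 = q S_1⁻¹ S_2⁻¹ T`, `Y_2 = S_2⁻¹ T S_1`,
`Y_3 = q⁻¹ T S_1 S_2`, where `qi` is an inverse of `q` in `R`. -/
noncomputable def Y (qi : R) : Fin 3 → HeckeAlg R q :=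
  ![algebraMap R (HeckeAlg R q) q * S1i R q qi * S2i R q qi * T R q,
    S2i R q qi * T R q * S1 R q,
    algebraMap R (HeckeAlg R q) qi * T R q * S1 R q * S2 R q]

end HeckeAlg

noncomputable section

variable (p : ℕ) [Fact p.Prime] (k : Type) [Field k] [IsAlgClosed k] [CharP k p]

/-- `H_k = H ⊗_{ℤ[q]} k` with `q ↦ 0`. -/
abbrev Hk : Type := HeckeAlg k 0

/-- The action of `T` on a `1`-dimensional space: multiplication by `c`. -/
def Tmat1 (c : k) : Module.End k (Fin 1 → k) := Matrix.mulVecLin !![c]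

/-- The action of `T` on the `2`-dimensional space with basis `w, Tw` where
`T(Tw) = -y²w - yTw`. -/
def Tmat2 (y : k) : Module.End k (Fin 2 → k) := Matrix.mulVecLin !![0, -y^2; 1, -y]

/-- The action of `T` on the `3`-dimensional space with basis `v, Tv, T²v` where
`T(T²v) = zv`. -/
def Tmat3 (z : k) : Module.End k (Fin 3 → k) := Matrix.mulVecLin !![0, 0, z; 1, 0, 0; 0, 1, 0]

/-- The action of `T` on the `6`-dimensional space with basis `v, Tv, T²v, w, Tw, T²w`
where `T(T²v) = zv`, `T(T²w) = zw`. -/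
def Tmat6 (z : k) : Module.End k (Fin 6 → k) := Matrix.mulVecLin
  !![0, 0, z, 0, 0, 0;
     1, 0, 0, 0, 0, 0;
     0, 1, 0, 0, 0, 0;
     0, 0, 0, 0, 0, z;
     0, 0, 0, 1, 0, 0;
     0, 0, 0, 0, 1, 0]

/-- The action of `S_1` on `L_6(z,y)`: `S_1v = 0`, `S_1(Tv) = T²w`, `S_1(T²v) = -T²v`,
`S_1w = -w`, `S_1(Tw) = (y/z)T²v`, `S_1(T²w) = -T²w`. -/
def SL6 (z y : k) : Module.End k (Fin 6 → k) := Matrix.mulVecLin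
  !![0, 0, 0,  0,  0,     0;
     0, 0, 0,  0,  0,     0;
     0, 0, -1, 0,  y / z, 0;
     0, 0, 0,  -1, 0,     0;
     0, 0, 0,  0,  0,     0;
     0, 1, 0,  0,  0,     -1]

/-- The action of `S_1` on `L̃_6(z,y)`: as on `L_6(z,y)` except `S_1v = w`, `S_1(Tv) = 0`. -/
def SLt6 (z y : k) : Module.End k (Fin 6 → k) := Matrix.mulVecLin
  !![0, 0, 0,  0,  0,     0;
     0, 0, 0,  0,  0,     0;
     0, 0, -1, 0,  y / z, 0;
     1, 0, 0,  -1, 0,     0;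
     0, 0, 0,  0,  0,     0;
     0, 0, 0,  0,  0,     -1]

/-- The action of `S_1` on `K_6(z,y,y')`: `S_1v = w`, `S_1(Tv) = (y/y')T²w`,
`S_1(T²v) = -T²v`, `S_1w = -w`, `S_1(Tw) = (y'/z)T²v`, `S_1(T²w) = -T²w`. -/
def SK6 (z y y' : k) : Module.End k (Fin 6 → k) := Matrix.mulVecLin
  !![0, 0,      0,  0,  0,      0;
     0, 0,      0,  0,  0,      0;
     0, 0,      -1, 0,  y' / z, 0;
     1, 0,      0,  -1, 0,      0;
     0, 0,      0,  0,  0,      0;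
     0, y / y', 0,  0,  0,      -1]

/-- The action of `S_1` on `M_3(z,y)`: `S_1v = 0`, `S_1(Tv) = y⁻¹T²v`, `S_1(T²v) = -T²v`. -/
def SM3 (y : k) : Module.End k (Fin 3 → k) := Matrix.mulVecLin
  !![0, 0, 0; 0, 0, 0; 0, y⁻¹, -1]

/-- The action of `S_1` on `M̃_3(z,y)`: `S_1v = -v`, `S_1(Tv) = -y⁻¹T²v`, `S_1(T²v) = -T²v`. -/
def SMt3 (y : k) : Module.End k (Fin 3 → k) := Matrix.mulVecLin
  !![-1, 0, 0; 0, 0, 0; 0, -y⁻¹, -1]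

/-- The action of `S_1` on `N_3(z,y)`: `S_1v = -v`, `S_1(Tv) = 0`, `S_1(T²v) = -yTv - T²v`. -/
def SN3 (y : k) : Module.End k (Fin 3 → k) := Matrix.mulVecLin
  !![-1, 0, 0; 0, 0, -y; 0, 0, -1]

/-- The action of `S_1` on `Ñ_3(z,y)`: `S_1v = 0`, `S_1(Tv) = 0`, `S_1(T²v) = yTv - T²v`. -/
def SNt3 (y : k) : Module.End k (Fin 3 → k) := Matrix.mulVecLin
  !![0, 0, 0; 0, 0, y; 0, 0, -1]

/-- The action of `S_1` on `P_3(z)`: `S_1v = 0`, `S_1(Tv) = 0`, `S_1(T²v) = -T²v`. -/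
def SP3 : Module.End k (Fin 3 → k) := Matrix.mulVecLin
  !![0, 0, 0; 0, 0, 0; 0, 0, -1]

/-- The action of `S_1` on `P̃_3(z)`: `S_1v = -v`, `S_1(Tv) = 0`, `S_1(T²v) = -T²v`. -/
def SPt3 : Module.End k (Fin 3 → k) := Matrix.mulVecLin
  !![-1, 0, 0; 0, 0, 0; 0, 0, -1]

/-- The action of `S_1` on `M_2(y)`: `S_1w = -w`, `S_1(Tw) = 0`. -/
def SM2 : Module.End k (Fin 2 → k) := Matrix.mulVecLin !![-1, 0; 0, 0]

/-- The action of `S_1` on `M̃_2(y)`: `S_1w = 0`, `S_1(Tw) = -Tw`. -/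
def SMt2 : Module.End k (Fin 2 → k) := Matrix.mulVecLin !![0, 0; 0, -1]

end

/-!
Since `T³ = z`, the vectors `u, Tu, T²u` span a `T`-stable subspace of dimension at most `3` for
every `u`. If `y² = y'` take `u = yv + Tw`, and if `y'² = zy` take `u = v + w`: then `S_1` maps
`u, Tu, T²u` into the line of `T²u`, so this subspace is a proper nonzero submodule.

Conversely, let neither equality hold and let `W` be a submodule. If `S_1` kills `W`, comparing the
coordinates of `x`, `Tx` and `T²x` for `x ∈ W` gives `W = 0`. Otherwise `W` contains a nonzero
vector of the range `⟨T²v, w, T²w⟩` of `S_1`. On this range `S_1T` has kernel `⟨T²v + T²w⟩` and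
takes values in `⟨T²v, w⟩`; on `⟨T²v, w⟩` the operator `S_1T²` has kernel `⟨y'T²v + zyw⟩` and
takes values in `⟨T²w⟩`, which it sends back to `⟨T²v⟩`. So `W` contains a nonzero multiple of
`T²v`, which generates everything, unless one of the two kernel lines is met on the way. On the
first line apply `S_1T²`, on the second `S_1T`: the result is not proportional to the vector it
comes from because `y'² ≠ zy`, respectively `y² ≠ y'`, so a combination of the two is a nonzero
multiple of `T²v`.
-/

open Module.End (invtSubmodule mem_invtSubmodule_iff_forall_mem_of_mem)

theorem mem_invtSubmodule_of_mul_eq_one {R M : Type*} [Ring R] [AddCommGroup M] [Module R M]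
    [IsArtinian R M] {f g : Module.End R M} (hgf : g * f = 1)
    {W : Submodule R M} (hf : W ∈ invtSubmodule f) : W ∈ invtSubmodule g := by
  have hleft : Function.LeftInverse g f := LinearMap.congr_fun hgf
  rw [mem_invtSubmodule_iff_forall_mem_of_mem] at hf ⊢
  have hinj : Function.Injective (f.restrict hf) := fun _ _ h ↦
    Subtype.ext (hleft.injective (congrArg Subtype.val h))
  intro x hx
  obtain ⟨w, hw⟩ := IsArtinian.surjective_of_injective_endomorphism _ hinj ⟨x, hx⟩
  rw [show x = f w from (congrArg Subtype.val hw).symm, hleft]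
  exact w.2

section Krylov

variable {R M : Type*} [Semiring R] [AddCommMonoid M] [Module R M]

/-- The Krylov subspace of order `n` generated by `u` under `f`: the span of
`u, f u, …, f ^ (n - 1) u`. -/
def krylov (f : Module.End R M) (u : M) (n : ℕ) : Submodule R M :=
  Submodule.span R (Set.range fun i : Fin n ↦ (f ^ (i : ℕ)) u)

theorem pow_apply_mem_krylov (f : Module.End R M) (u : M) {n i : ℕ} (hi : i < n) :
    (f ^ i) u ∈ krylov f u n :=
  Submodule.subset_span ⟨⟨i, hi⟩, rfl⟩

theorem krylov_mem_invtSubmodule_iff {f g : Module.End R M} {u : M} {n : ℕ} :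
    krylov f u n ∈ invtSubmodule g ↔ ∀ i < n, g ((f ^ i) u) ∈ krylov f u n := by
  refine ⟨fun h i hi ↦ h (pow_apply_mem_krylov f u hi), fun h ↦ Submodule.span_le.2 ?_⟩
  rintro _ ⟨i, rfl⟩
  exact h i i.2

theorem krylov_mem_invtSubmodule_self {f : Module.End R M} {u : M} {n : ℕ}
    (h : (f ^ n) u ∈ krylov f u n) : krylov f u n ∈ invtSubmodule f := by
  refine krylov_mem_invtSubmodule_iff.2 fun i hi ↦ ?_
  rw [← Module.End.mul_apply, ← pow_succ']
  rcases Nat.lt_or_eq_of_le hi with hlt | rfl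
  · exact pow_apply_mem_krylov f u hlt
  · exact h

theorem krylov_mem_invtSubmodule_of_forall_smul {f g : Module.End R M} {u : M} {n j : ℕ}
    (hj : j < n) (h : ∀ i < n, ∃ c : R, g ((f ^ i) u) = c • (f ^ j) u) :
    krylov f u n ∈ invtSubmodule g := by
  refine krylov_mem_invtSubmodule_iff.2 fun i hi ↦ ?_
  obtain ⟨c, hc⟩ := h i hi
  rw [hc]
  exact Submodule.smul_mem _ c (pow_apply_mem_krylov f u hj)

theorem krylov_ne_bot {f : Module.End R M} {u : M} (hu : u ≠ 0) {n : ℕ} (hn : 0 < n) :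
    krylov f u n ≠ ⊥ :=
  Submodule.ne_bot_iff _ |>.2 ⟨u, pow_apply_mem_krylov f u hn, hu⟩

theorem krylov_ne_top [StrongRankCondition R] {f : Module.End R M} {u : M} {n : ℕ}
    (hn : n < Module.finrank R M) : krylov f u n ≠ ⊤ := by
  intro htop
  have hle := finrank_range_le_card (R := R) fun i : Fin n ↦ (f ^ (i : ℕ)) u
  rw [Set.finrank, ← krylov, htop, finrank_top, Fintype.card_fin] at hle
  exact hle.not_gt hn

end Krylov

namespace HeckeAlg

variable {R : Type} [CommRing R] {q : R}

section Lift

variable {A : Type*} [Ring A] [Algebra R A]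

/-- The universal property of the Hecke algebra: `T ↦ t` and `S_1 ↦ s` extend to an algebra
homomorphism once the relations hold, with `S_2 = T⁻¹ S_1 T` eliminated. -/
noncomputable def lift (t : Aˣ) (s : A) (quad : (s + 1) * (s - algebraMap R A q) = 0)
    (comm : Commute ((t : A) ^ 3) s)
    (braid : s * (↑t⁻¹ * s * t) * s = ↑t⁻¹ * s * t * s * (↑t⁻¹ * s * t)) :
    HeckeAlg R q →ₐ[R] A :=
  RingQuot.liftAlgHom R
    ⟨FreeAlgebra.lift R ![(t : A), ↑t⁻¹, s, ↑t⁻¹ * s * t], by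
      rintro _ _ (_ | _ | _ | _ | _ | _)
      · simp
      · simp
      · simpa using quad
      · simpa using comm.eq
      · simpa using braid
      · simp [mul_assoc]⟩

variable {t : Aˣ} {s : A} {quad : (s + 1) * (s - algebraMap R A q) = 0}
  {comm : Commute ((t : A) ^ 3) s}
  {braid : s * (↑t⁻¹ * s * t) * s = ↑t⁻¹ * s * t * s * (↑t⁻¹ * s * t)}

theorem lift_T : lift t s quad comm braid (T R q) = t := by
  simp [lift, T, gen]

theorem lift_S1 : lift t s quad comm braid (S1 R q) = s := by
  simp [lift, S1, gen]

end Lift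

theorem S2_eq : S2 R q = Tinv R q * S1 R q * T R q := by
  rw [mul_assoc, ← T_mul_S2, ← mul_assoc, Tinv_mul_T, one_mul]

theorem adjoin_range_gen : Algebra.adjoin R (Set.range (gen R q)) = ⊤ := by
  rw [show gen R q = RingQuot.mkAlgHom R (HeckeRel R q) ∘ FreeAlgebra.ι R from rfl,
    Set.range_comp, ← AlgHom.map_adjoin, FreeAlgebra.adjoin_range_ι, Algebra.map_top,
    AlgHom.range_eq_top]
  exact RingQuot.mkAlgHom_surjective R _

theorem adjoin_T_Tinv_S1 : Algebra.adjoin R {T R q, Tinv R q, S1 R q} = ⊤ := by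
  rw [eq_top_iff, ← adjoin_range_gen, Algebra.adjoin_le_iff]
  have mem : {T R q, Tinv R q, S1 R q} ⊆
      (Algebra.adjoin R {T R q, Tinv R q, S1 R q} : Set (HeckeAlg R q)) := Algebra.subset_adjoin
  simp only [Set.insert_subset_iff, Set.singleton_subset_iff, SetLike.mem_coe] at mem
  obtain ⟨hT, hTinv, hS1⟩ := mem
  rintro _ ⟨i, rfl⟩
  fin_cases i
  · exact hT
  · exact hTinv
  · exact hS1
  · change S2 R q ∈ _
    rw [S2_eq]
    exact mul_mem (mul_mem hTinv hS1) hT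

theorem forall_mem_invtSubmodule_iff {M : Type*} [AddCommGroup M] [Module R M] [IsArtinian R M]
    (ρ : HeckeAlg R q →ₐ[R] Module.End R M) {W : Submodule R M} :
    (∀ a, W ∈ invtSubmodule (ρ a)) ↔
      W ∈ invtSubmodule (ρ (T R q)) ∧ W ∈ invtSubmodule (ρ (S1 R q)) := by
  refine ⟨fun h ↦ ⟨h _, h _⟩, fun ⟨hT, hS1⟩ a ↦ ?_⟩
  have hTinv : W ∈ invtSubmodule (ρ (Tinv R q)) :=
    mem_invtSubmodule_of_mul_eq_one (by rw [← map_mul, Tinv_mul_T, map_one]) hT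
  have ha : a ∈ Algebra.adjoin R {T R q, Tinv R q, S1 R q} := by
    rw [adjoin_T_Tinv_S1]; exact Algebra.mem_top
  induction ha using Algebra.adjoin_induction with
  | mem a ha => rcases ha with rfl | rfl | rfl <;> assumption
  | algebraMap r => exact fun x hx ↦ by simpa using W.smul_mem r hx
  | add a b _ _ iha ihb => exact fun x hx ↦ by simpa using W.add_mem (iha hx) (ihb hx)
  | mul a b _ _ iha ihb => exact fun x hx ↦ by simpa using iha (ihb hx)

end HeckeAlg

section Generators

variable {k : Type} [Field k]

theorem Tmat6_apply (z : k) (x : Fin 6 → k) :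
    Tmat6 k z x = ![z * x 2, x 0, x 1, z * x 5, x 3, x 4] := by
  ext i
  fin_cases i <;> simp [Tmat6, Matrix.vecHead, Matrix.vecTail]

theorem SK6_apply (z y y' : k) (x : Fin 6 → k) :
    SK6 k z y y' x = ![0, 0, y' / z * x 4 - x 2, x 0 - x 3, 0, y / y' * x 1 - x 5] := by
  ext i
  fin_cases i <;> simp [SK6, Matrix.vecHead, Matrix.vecTail] <;> ring

theorem Tmat6_pow_three (z : k) : Tmat6 k z ^ 3 = algebraMap k _ z := by
  refine LinearMap.ext fun x ↦ ?_
  simp only [pow_succ', pow_zero, mul_one, Module.End.mul_apply, Tmat6_apply,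
    Module.algebraMap_end_apply]
  ext i
  fin_cases i <;> simp

theorem SK6_add_one_mul_SK6 (z y y' : k) : (SK6 k z y y' + 1) * SK6 k z y y' = 0 := by
  refine LinearMap.ext fun x ↦ ?_
  simp only [Module.End.mul_apply, LinearMap.add_apply, Module.End.one_apply, SK6_apply]
  ext i
  fin_cases i <;> simp

/-- `T` as an invertible operator: its inverse is `z⁻¹T²` because `T³ = z`. -/
noncomputable def Tmat6Unit (z : kˣ) : (Module.End k (Fin 6 → k))ˣ where
  val := Tmat6 k z
  inv := (z : k)⁻¹ • Tmat6 k z ^ 2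
  val_inv := by
    rw [mul_smul_comm, ← pow_succ', Tmat6_pow_three, Algebra.algebraMap_eq_smul_one,
      inv_smul_smul₀ z.ne_zero]
  inv_val := by
    rw [smul_mul_assoc, ← pow_succ, Tmat6_pow_three, Algebra.algebraMap_eq_smul_one,
      inv_smul_smul₀ z.ne_zero]

theorem Tmat6Unit_inv_apply (z : kˣ) (x : Fin 6 → k) :
    (↑(Tmat6Unit z)⁻¹ : Module.End k (Fin 6 → k)) x =
      ![x 1, x 2, (z : k)⁻¹ * x 0, x 4, x 5, (z : k)⁻¹ * x 3] := by
  change ((z : k)⁻¹ • Tmat6 k z ^ 2) x = _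
  simp only [LinearMap.smul_apply, pow_two, Module.End.mul_apply, Tmat6_apply]
  ext i
  fin_cases i <;> simp

theorem conj_SK6_apply (z : kˣ) (y y' : k) (x : Fin 6 → k) :
    (↑(Tmat6Unit z)⁻¹ * SK6 k z y y' * ↑(Tmat6Unit z)) x =
      ![0, y' / z * x 3 - x 1, 0, 0, y / y' * x 0 - x 4, x 2 - x 5] := by
  change (↑(Tmat6Unit z)⁻¹ : Module.End k (Fin 6 → k)) (SK6 k z y y' (Tmat6 k z x)) = _
  simp only [Tmat6Unit_inv_apply, SK6_apply, Tmat6_apply]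
  ext i
  fin_cases i <;> simp [← mul_sub]

theorem SK6_braid (z : kˣ) (y y' : k) :
    SK6 k z y y' * (↑(Tmat6Unit z)⁻¹ * SK6 k z y y' * ↑(Tmat6Unit z)) * SK6 k z y y' =
      ↑(Tmat6Unit z)⁻¹ * SK6 k z y y' * ↑(Tmat6Unit z) * SK6 k z y y' *
        (↑(Tmat6Unit z)⁻¹ * SK6 k z y y' * ↑(Tmat6Unit z)) := by
  have hS₂ := conj_SK6_apply z y y'
  generalize ↑(Tmat6Unit z)⁻¹ * SK6 k z y y' * ↑(Tmat6Unit z) = S₂ at hS₂ ⊢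
  refine LinearMap.ext fun x ↦ ?_
  simp only [Module.End.mul_apply, hS₂, SK6_apply]
  ext i
  fin_cases i <;> simp
  ring

/-- The `H_k`-module `K_6(z,y,y')`, as a representation on `k⁶`. -/
noncomputable def K6 (z : kˣ) (y y' : k) : Hk k →ₐ[k] Module.End k (Fin 6 → k) :=
  HeckeAlg.lift (Tmat6Unit z) (SK6 k z y y')
    (by rw [map_zero, sub_zero, SK6_add_one_mul_SK6])
    (by
      change Commute (Tmat6 k z ^ 3) _
      rw [Tmat6_pow_three]
      exact Algebra.commutes _ _)
    (SK6_braid z y y')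

theorem K6_T (z : kˣ) (y y' : k) : K6 z y y' (HeckeAlg.T k 0) = Tmat6 k z :=
  HeckeAlg.lift_T

theorem K6_S1 (z : kˣ) (y y' : k) : K6 z y y' (HeckeAlg.S1 k 0) = SK6 k z y y' :=
  HeckeAlg.lift_S1

end Generators

section Reducible

variable {k : Type} [Field k]

theorem krylov_three_mem_invtSubmodule_Tmat6 (z : k) (u : Fin 6 → k) :
    krylov (Tmat6 k z) u 3 ∈ invtSubmodule (Tmat6 k z) := by
  refine krylov_mem_invtSubmodule_self ?_
  rw [Tmat6_pow_three, Module.algebraMap_end_apply]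
  exact Submodule.smul_mem _ z (pow_apply_mem_krylov _ u three_pos)

theorem krylov_mem_invtSubmodule_SK6_of_sq_eq {z y y' : k} (hz : z ≠ 0) (hy' : y' ≠ 0)
    (h : y ^ 2 = y') :
    krylov (Tmat6 k z) ![y, 0, 0, 0, 1, 0] 3 ∈ invtSubmodule (SK6 k z y y') := by
  refine krylov_mem_invtSubmodule_of_forall_smul (j := 2) (by norm_num) fun i hi ↦
    ⟨![y / z, 0, -1] ⟨i, hi⟩, ?_⟩
  have hy : y ≠ 0 := by rintro rfl; simp [← h] at hy'
  subst h
  interval_cases i <;> ext i <;> fin_cases i <;>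
    simp [pow_succ, Tmat6_apply, SK6_apply] <;> field_simp
  simp

theorem krylov_mem_invtSubmodule_SK6_of_sq_eq_mul {z y y' : k} (hz : z ≠ 0) (hy' : y' ≠ 0)
    (h : y' ^ 2 = z * y) :
    krylov (Tmat6 k z) ![1, 0, 0, 1, 0, 0] 3 ∈ invtSubmodule (SK6 k z y y') := by
  have hyz : y / y' = y' / z := by field_simp; rw [h, mul_comm]
  refine krylov_mem_invtSubmodule_of_forall_smul (j := 2) (by norm_num) fun i hi ↦
    ⟨![0, y' / z, -1] ⟨i, hi⟩, ?_⟩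
  interval_cases i <;> ext i <;> fin_cases i <;>
    simp [pow_succ, Tmat6_apply, SK6_apply, hyz]

end Reducible

section Simple

variable {k : Type} [Field k] {z y y' : k} {W : Submodule k (Fin 6 → k)}

theorem Tmat6_single (z : k) {i : Fin 6} (h2 : i ≠ 2) (h5 : i ≠ 5) :
    Tmat6 k z (Pi.single i 1) = Pi.single (i + 1) 1 := by
  ext j
  fin_cases i <;> fin_cases j <;> simp_all [Tmat6_apply]

theorem SK6_single_zero (z y y' : k) : SK6 k z y y' (Pi.single 0 1) = Pi.single 3 1 := by
  ext j
  fin_cases j <;> simp [SK6_apply]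

theorem eq_top_of_single_zero_mem (hT : ∀ x ∈ W, Tmat6 k z x ∈ W)
    (hS : ∀ x ∈ W, SK6 k z y y' x ∈ W) (hv : Pi.single 0 1 ∈ W) : W = ⊤ := by
  have succ_mem {i : Fin 6} (h2 : i ≠ 2) (h5 : i ≠ 5) (hi : Pi.single i 1 ∈ W) :
      Pi.single (i + 1) 1 ∈ W := by
    rw [← Tmat6_single z h2 h5]
    exact hT _ hi
  have hw : Pi.single 3 1 ∈ W := by
    rw [← SK6_single_zero z y y']
    exact hS _ hv
  have hTv : Pi.single 1 1 ∈ W := succ_mem (by decide) (by decide) hv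
  have hTw : Pi.single 4 1 ∈ W := succ_mem (by decide) (by decide) hw
  rw [eq_top_iff, ← (Pi.basisFun k (Fin 6)).span_eq, Submodule.span_le]
  rintro _ ⟨i, rfl⟩
  rw [Pi.basisFun_apply]
  fin_cases i
  exacts [hv, hTv, succ_mem (by decide) (by decide) hTv, hw, hTw,
    succ_mem (by decide) (by decide) hTw]

theorem eq_top_of_single_two_mem (hz : z ≠ 0) (hT : ∀ x ∈ W, Tmat6 k z x ∈ W)
    (hS : ∀ x ∈ W, SK6 k z y y' x ∈ W) {a : k} (ha : a ≠ 0)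
    (h : ![0, 0, a, 0, 0, 0] ∈ W) : W = ⊤ := by
  refine eq_top_of_single_zero_mem hT hS ((W.smul_mem_iff (mul_ne_zero hz ha)).1 ?_)
  convert hT _ h using 1
  ext i
  fin_cases i <;> simp [Tmat6_apply]

-- `![0, 0, a, b, 0, c]` is `aT²v + bw + cT²w`, the general element of the range of `S_1`.
theorem SK6_Tmat6_mem (hT : ∀ x ∈ W, Tmat6 k z x ∈ W) (hS : ∀ x ∈ W, SK6 k z y y' x ∈ W)
    {a b c : k} (h : ![0, 0, a, b, 0, c] ∈ W) :
    ![0, 0, y' / z * b, z * (a - c), 0, 0] ∈ W := by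
  convert hS _ (hT _ h) using 1
  ext i
  fin_cases i <;> simp [Tmat6_apply, SK6_apply, mul_sub]

theorem SK6_Tmat6_sq_mem (hz : z ≠ 0) (hT : ∀ x ∈ W, Tmat6 k z x ∈ W)
    (hS : ∀ x ∈ W, SK6 k z y y' x ∈ W) {a b c : k} (h : ![0, 0, a, b, 0, c] ∈ W) :
    ![0, 0, y' * c, 0, 0, z * y / y' * a - b] ∈ W := by
  convert hS _ (hT _ (hT _ h)) using 1
  ext i
  fin_cases i <;> simp [Tmat6_apply, SK6_apply] <;> field_simp

theorem eq_top_of_mem_ker_SK6_Tmat6 (hz : z ≠ 0) (hy' : y' ≠ 0) (hne : y' ^ 2 ≠ z * y)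
    (hT : ∀ x ∈ W, Tmat6 k z x ∈ W) (hS : ∀ x ∈ W, SK6 k z y y' x ∈ W)
    {a : k} (ha : a ≠ 0) (h : ![0, 0, a, 0, 0, a] ∈ W) : W = ⊤ := by
  refine eq_top_of_single_two_mem hz hT hS (a := (z * y - y' ^ 2) * a)
    (mul_ne_zero (sub_ne_zero.2 hne.symm) ha) ?_
  convert W.sub_mem (W.smul_mem (z * y) h) (W.smul_mem y' (SK6_Tmat6_sq_mem hz hT hS h)) using 1
  ext i
  fin_cases i <;> simp <;> field_simp
  simp

theorem eq_top_of_mem_ker_SK6_Tmat6_sq (hz : z ≠ 0) (hy' : y' ≠ 0) (hne : y ^ 2 ≠ y')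
    (hT : ∀ x ∈ W, Tmat6 k z x ∈ W) (hS : ∀ x ∈ W, SK6 k z y y' x ∈ W)
    {a : k} (ha : a ≠ 0) (h : ![0, 0, a, z * y / y' * a, 0, 0] ∈ W) : W = ⊤ := by
  refine eq_top_of_single_two_mem hz hT hS (a := (y' - y ^ 2) * a)
    (mul_ne_zero (sub_ne_zero.2 hne.symm) ha) ?_
  convert W.sub_mem (W.smul_mem y' h) (W.smul_mem y (SK6_Tmat6_mem hT hS h)) using 1
  ext i
  fin_cases i <;> simp <;> field_simp
  simp

theorem eq_top_of_mem_range_SK6_Tmat6 (hz : z ≠ 0) (hy' : y' ≠ 0) (hne : y ^ 2 ≠ y')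
    (hT : ∀ x ∈ W, Tmat6 k z x ∈ W) (hS : ∀ x ∈ W, SK6 k z y y' x ∈ W)
    {a b : k} (hab : a ≠ 0 ∨ b ≠ 0) (h : ![0, 0, a, b, 0, 0] ∈ W) : W = ⊤ := by
  by_cases hb : z * y / y' * a - b = 0
  · obtain rfl := sub_eq_zero.1 hb
    have ha : a ≠ 0 := by rintro rfl; simp at hab
    exact eq_top_of_mem_ker_SK6_Tmat6_sq hz hy' hne hT hS ha h
  · have h' := SK6_Tmat6_sq_mem hz hT hS (SK6_Tmat6_sq_mem hz hT hS h)
    simp only [mul_zero, sub_zero] at h'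
    exact eq_top_of_single_two_mem hz hT hS (mul_ne_zero hy' hb) h'

theorem eq_top_of_mem_range_SK6 (hz : z ≠ 0) (hy' : y' ≠ 0) (hne : y ^ 2 ≠ y')
    (hne' : y' ^ 2 ≠ z * y) (hT : ∀ x ∈ W, Tmat6 k z x ∈ W)
    (hS : ∀ x ∈ W, SK6 k z y y' x ∈ W) {a b c : k} (habc : ![0, 0, a, b, 0, c] ≠ 0)
    (h : ![0, 0, a, b, 0, c] ∈ W) : W = ⊤ := by
  by_cases hker : b = 0 ∧ a = c
  · obtain ⟨rfl, rfl⟩ := hker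
    have ha : a ≠ 0 := by rintro rfl; simp at habc
    exact eq_top_of_mem_ker_SK6_Tmat6 hz hy' hne' hT hS ha h
  · refine eq_top_of_mem_range_SK6_Tmat6 hz hy' hne hT hS ?_ (SK6_Tmat6_mem hT hS h)
    by_contra! hzero
    exact hker (by simpa [hz, hy', sub_eq_zero] using hzero)

theorem eq_bot_of_le_ker_SK6 (hz : z ≠ 0) (hy' : y' ≠ 0) (hne : y' ^ 2 ≠ z * y)
    (hT : ∀ x ∈ W, Tmat6 k z x ∈ W) (hW : W ≤ LinearMap.ker (SK6 k z y y')) : W = ⊥ := by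
  refine (Submodule.eq_bot_iff W).2 fun x hx ↦ ?_
  have ker_coords {x : Fin 6 → k} (hx : x ∈ W) :
      y' / z * x 4 = x 2 ∧ x 0 = x 3 ∧ y / y' * x 1 = x 5 := by
    have h := hW hx
    rw [LinearMap.mem_ker, SK6_apply] at h
    simpa [sub_eq_zero] using h
  obtain ⟨h42, h03, -⟩ := ker_coords hx
  obtain ⟨h31, h25, h04⟩ := ker_coords (hT _ hx)
  obtain ⟨-, h14, -⟩ := ker_coords (hT _ (hT _ hx))
  simp only [Tmat6_apply, Matrix.cons_val, Matrix.cons_val_zero, Matrix.cons_val_one,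
    mul_eq_mul_left_iff, hz, or_false] at h31 h25 h04 h14
  have h0 : x 0 = 0 := by
    have hcoef : y / y' - y' / z ≠ 0 := by
      rw [div_sub_div _ _ hy' hz]
      exact div_ne_zero (by rw [sub_ne_zero, mul_comm y, ← pow_two]; exact hne.symm)
        (mul_ne_zero hy' hz)
    refine (mul_eq_zero.1 (?_ : (y / y' - y' / z) * x 0 = 0)).resolve_left hcoef
    rw [sub_mul, h04, h03, h31, h14, sub_self]
  have h3 : x 3 = 0 := h03 ▸ h0
  have h1 : x 1 = 0 := by rw [← h31, h3, mul_zero]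
  have h4 : x 4 = 0 := h14 ▸ h1
  have h2 : x 2 = 0 := by rw [← h42, h4, mul_zero]
  have h5 : x 5 = 0 := h25 ▸ h2
  ext i
  fin_cases i
  exacts [h0, h1, h2, h3, h4, h5]

theorem eq_bot_or_eq_top (hz : z ≠ 0) (hy' : y' ≠ 0) (hne : y ^ 2 ≠ y') (hne' : y' ^ 2 ≠ z * y)
    (hT : ∀ x ∈ W, Tmat6 k z x ∈ W) (hS : ∀ x ∈ W, SK6 k z y y' x ∈ W) :
    W = ⊥ ∨ W = ⊤ := by
  by_cases hker : W ≤ LinearMap.ker (SK6 k z y y')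
  · exact .inl (eq_bot_of_le_ker_SK6 hz hy' hne' hT hker)
  · obtain ⟨x, hxW, hx⟩ := SetLike.not_le_iff_exists.1 hker
    have hSx := hS x hxW
    rw [LinearMap.mem_ker, SK6_apply] at hx
    rw [SK6_apply] at hSx
    exact .inr (eq_top_of_mem_range_SK6 hz hy' hne hne' hT hS hx hSx)

end Simple

theorem forall_eq_bot_or_eq_top_iff {k : Type} [Field k] {z y y' : k} (hz : z ≠ 0) (hy' : y' ≠ 0) :
    (∀ W ∈ invtSubmodule (Tmat6 k z), W ∈ invtSubmodule (SK6 k z y y') → W = ⊥ ∨ W = ⊤) ↔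
      y ^ 2 ≠ y' ∧ y' ^ 2 ≠ z * y := by
  refine ⟨fun h ↦ ?_, fun ⟨hne, hne'⟩ W hT hS ↦ eq_bot_or_eq_top hz hy' hne hne' hT hS⟩
  have not_stable {u : Fin 6 → k} (hu : u ≠ 0) :
      krylov (Tmat6 k z) u 3 ∉ invtSubmodule (SK6 k z y y') := fun hS ↦
    (h _ (krylov_three_mem_invtSubmodule_Tmat6 z u) hS).elim (krylov_ne_bot hu three_pos)
      (krylov_ne_top (by simp))
  exact ⟨fun hsq ↦ not_stable (fun h0 ↦ one_ne_zero (congrFun h0 4))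
      (krylov_mem_invtSubmodule_SK6_of_sq_eq hz hy' hsq),
    fun hsq ↦ not_stable (fun h0 ↦ one_ne_zero (congrFun h0 0))
      (krylov_mem_invtSubmodule_SK6_of_sq_eq_mul hz hy' hsq)⟩

theorem statement11_general (k : Type) [Field k] (z : kˣ) (y : k) (y' : kˣ) :
    ∃ ρ : Hk k →ₐ[k] Module.End k (Fin 6 → k),
      ρ (HeckeAlg.T k 0) = Tmat6 k z ∧ ρ (HeckeAlg.S1 k 0) = SK6 k z y y' ∧
      ((∀ W : Submodule k (Fin 6 → k), (∀ a : Hk k, ∀ x ∈ W, ρ a x ∈ W) → W = ⊥ ∨ W = ⊤) ↔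
        (y ^ 2 ≠ (y' : k) ∧ (y' : k) ^ 2 ≠ (z : k) * y)) := by
  refine ⟨K6 z y y', K6_T z y y', K6_S1 z y y', ?_⟩
  rw [← forall_eq_bot_or_eq_top_iff z.ne_zero y'.ne_zero]
  refine forall_congr' fun W ↦ ?_
  simp only [← mem_invtSubmodule_iff_forall_mem_of_mem, HeckeAlg.forall_mem_invtSubmodule_iff,
    K6_T, K6_S1, and_imp]

/-- For `z, y, y' ∈ k^×`, the formulas defining `K_6(z,y,y')` endow the `6`-dimensional `k`-vector space with an `H_k`-module structure, and the `H_k`-module `K_6(z,y,y')` is simple if and only if `y² ≠ y'` and `y'² ≠ zy`. -/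
theorem statement11 (p : ℕ) [Fact p.Prime] (k : Type) [Field k] [IsAlgClosed k] [CharP k p]
    (z y y' : kˣ) :
    ∃ ρ : Hk k →ₐ[k] Module.End k (Fin 6 → k),
      ρ (HeckeAlg.T k 0) = Tmat6 k z ∧ ρ (HeckeAlg.S1 k 0) = SK6 k z y y' ∧
      ((∀ W : Submodule k (Fin 6 → k), (∀ a : Hk k, ∀ x ∈ W, ρ a x ∈ W) → W = ⊥ ∨ W = ⊤) ↔ ((y : k) ^ 2 ≠ (y' : k) ∧ (y' : k) ^ 2 ≠ (z : k) * (y : k))) :=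
  statement11_general k z y y'
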